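/- Let d = 2 and let M(N) be the expected minimum bipartite matching length in the Poissonized model on [0,1]² with intensity N. Then there is a constant C > 0 such that M(N) ≤ C √N log N for all N ≥ 2; consequently, for 2N independent uniform points X₁,…,X_N, Y₁,…,Y_N in [0,1]², one has E L_MBM(X₁,…,X_N; Y₁,…,Y_N) ≤ C' √N log N for some constant C' and all N ≥ 2. -/

import Mathlib

open MeasureTheory ProbabilityTheory Filter

noncomputable section

/-- The unit cube `[0,1]^d` in Euclidean space `ℝ^d`. -/
def unitCube (d : ℕ) : Set (EuclideanSpace ℝ (Fin d)) :=
  {x | ∀ i, x i ∈ Set.Icc (0 : ℝ) 1}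

/-- The uniform probability measure on the unit cube `[0,1]^d`
(the cube has Lebesgue measure one, so the restriction of Lebesgue measure
to the cube is the uniform probability measure on it). -/
def unifCube (d : ℕ) : Measure (EuclideanSpace ℝ (Fin d)) :=
  volume.restrict (unitCube d)

/-- `LMBMon X Y A B` is the minimum total Euclidean length of a partial bipartite
matching pairing `min A.card B.card` of the points `X j, j ∈ A` with as many of the
points `Y j, j ∈ B`, each pair consisting of one `X`-point and one `Y`-point. -/
def LMBMon {d N₁ N₂ : ℕ} (X : Fin N₁ → EuclideanSpace ℝ (Fin d))
    (Y : Fin N₂ → EuclideanSpace ℝ (Fin d)) (A : Finset (Fin N₁)) (B : Finset (Fin N₂)) : ℝ :=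
  sInf { s | ∃ (σ : Fin (min A.card B.card) ↪ Fin N₁) (τ : Fin (min A.card B.card) ↪ Fin N₂),
    (∀ i, σ i ∈ A) ∧ (∀ i, τ i ∈ B) ∧ s = ∑ i, dist (X (σ i)) (Y (τ i)) }

/-- `LMBM X Y` : the minimum total Euclidean length of a bipartite matching between the
points of `X` and the points of `Y`; if the two families have different cardinalities
`N₁ ≠ N₂`, it is the minimum length of a partial matching pairing `min N₁ N₂` points of
each family, leaving `|N₁ - N₂|` points unmatched. -/
def LMBM {d N₁ N₂ : ℕ} (X : Fin N₁ → EuclideanSpace ℝ (Fin d))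
    (Y : Fin N₂ → EuclideanSpace ℝ (Fin d)) : ℝ :=
  LMBMon X Y Finset.univ Finset.univ

/-- `MP d lam`: the expected length of a minimum bipartite matching in the Poissonized
model on `[0,1]^d` with intensity `lam`: the numbers `n₁, n₂` of points of the two
families are independent Poisson(lam) variables and the points are i.i.d. uniform
on the cube. -/
def MP (d : ℕ) (lam : ℝ) : ℝ :=
  ∑' n₁ : ℕ, ∑' n₂ : ℕ,
    (Real.exp (-lam) * lam ^ n₁ / n₁.factorial) *
      ((Real.exp (-lam) * lam ^ n₂ / n₂.factorial) *
        ∫ p : (Fin n₁ → EuclideanSpace ℝ (Fin d)) × (Fin n₂ → EuclideanSpace ℝ (Fin d)),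
          LMBM p.1 p.2 ∂ ((Measure.pi fun _ => unifCube d).prod (Measure.pi fun _ => unifCube d)))

end

section A
variable {α β ι : Type} [Fintype α] [Fintype β] [DecidableEq α] [DecidableEq β] [DecidableEq ι]

def IsM (M : Finset (α × β)) : Prop :=
  ∀ p ∈ M, ∀ q ∈ M, (p.1 = q.1 ∨ p.2 = q.2) → p = q

/-- pairs of `M` lie in common cells -/
def Same (a : α → ι) (b : β → ι) (M : Finset (α × β)) : Prop := ∀ p ∈ M, a p.1 = b p.2

def Mx (a : α → ι) (b : β → ι) (M : Finset (α × β)) : Prop :=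
  ∀ i j, a i = b j → (∃ p ∈ M, p.1 = i) ∨ (∃ p ∈ M, p.2 = j)

lemma exists_ext (a : α → ι) (b : β → ι) (M : Finset (α × β)) (h : IsM M) (hs : Same a b M) :
    ∃ M', M ⊆ M' ∧ IsM M' ∧ Same a b M' ∧ Mx a b M' := by
  obtain ⟨M', hM, hmax⟩ := (Set.toFinite {M : Finset (α × β) | IsM M ∧ Same a b M}).exists_le_maximal
    (show M ∈ _ from ⟨h, hs⟩)
  refine ⟨M', hM, hmax.prop.1, hmax.prop.2, ?_⟩
  intro i j hij
  by_contra hcon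
  push Not at hcon
  obtain ⟨h1, h2⟩ := hcon
  have hm : insert (i, j) M' ∈ {M : Finset (α × β) | IsM M ∧ Same a b M} := by
    refine ⟨?_, ?_⟩
    · intro p hp q hq hpq
      rw [Finset.mem_insert] at hp hq
      rcases hp with rfl | hp <;> rcases hq with rfl | hq
      · rfl
      · rcases hpq with e | e
        · exact absurd e.symm (h1 q hq)
        · exact absurd e.symm (h2 q hq)
      · rcases hpq with e | e
        · exact absurd e (h1 p hp)
        · exact absurd e (h2 p hp)
      · exact hmax.prop.1 p hp q hq hpq
    · intro p hp
      rw [Finset.mem_insert] at hp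
      rcases hp with rfl | hp
      · exact hij
      · exact hmax.prop.2 p hp
  have := hmax.le_of_ge hm (Finset.subset_insert _ _)
  exact h1 (i, j) (this (Finset.mem_insert_self _ _)) rfl

lemma card_sdiff_le (a : α → ι) (b : β → ι) (S : Finset ι) (ha : ∀ i, a i ∈ S)
    (M M' : Finset (α × β)) (hsub : M ⊆ M') (h' : IsM M')
    (hs : Same a b M) (hm : Mx a b M) :
    ((M' \ M).card : ℝ) ≤ ∑ q ∈ S, |((Finset.univ.filter (fun i => a i = q)).card : ℝ)
      - ((Finset.univ.filter (fun j => b j = q)).card : ℝ)| := by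
  classical
  have h : IsM M := fun p hp q hq => h' p (hsub hp) q (hsub hq)
  set U : Finset α := Finset.univ.filter (fun i => ∀ p ∈ M, p.1 ≠ i) with hU
  have h1 : (M' \ M).card ≤ U.card := by
    apply Finset.card_le_card_of_injOn Prod.fst
    · intro p hp
      simp only [Finset.coe_sdiff, Set.mem_sdiff, Finset.mem_coe] at hp
      simp only [hU, Finset.coe_filter, Finset.mem_univ, true_and, Set.mem_ofPred_eq]
      intro q hq e
      have := h' q (hsub hq) p hp.1 (Or.inl e)
      exact hp.2 (this ▸ hq)
    · intro p hp q hq e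
      simp only [Finset.coe_sdiff, Set.mem_sdiff, Finset.mem_coe] at hp hq
      exact h' p hp.1 q hq.1 (Or.inl e)
  have h2 : U.card = ∑ q ∈ S, (U.filter (fun i => a i = q)).card :=
    Finset.card_eq_sum_card_fiberwise (fun i _ => ha i)
  have h3 : ((M' \ M).card : ℝ) ≤ ∑ q ∈ S, ((U.filter (fun i => a i = q)).card : ℝ) := by
    exact_mod_cast h1.trans h2.le
  refine h3.trans (Finset.sum_le_sum fun q _ => ?_)
  by_cases he : U.filter (fun i => a i = q) = ∅
  · rw [he]; simp
  · obtain ⟨i0, hi0⟩ := Finset.nonempty_iff_ne_empty.mpr he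
    simp only [hU, Finset.mem_filter, Finset.mem_univ, true_and] at hi0
    refine le_trans ?_ (le_abs_self _)
    have h4 : (Finset.univ.filter (fun j => b j = q)).card ≤
        ((M.filter (fun p => a p.1 = q)).image Prod.snd).card := by
      apply Finset.card_le_card
      intro j hj
      simp only [Finset.mem_filter, Finset.mem_univ, true_and] at hj
      rcases hm i0 j (hi0.2.trans hj.symm) with ⟨p, hp, e⟩ | ⟨p, hp, e⟩
      · exact absurd e (hi0.1 p hp)
      · simp only [Finset.mem_image, Finset.mem_filter]
        exact ⟨p, ⟨hp, by rw [hs p hp, e, hj]⟩, e⟩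
    have h5 : (M.filter (fun p => a p.1 = q)).card =
        ((M.filter (fun p => a p.1 = q)).image Prod.fst).card := by
      rw [Finset.card_image_of_injOn]
      intro p hp r hr e
      simp only [Finset.coe_filter, Set.mem_ofPred_eq] at hp hr
      exact h p hp.1 r hr.1 (Or.inl e)
    have h6 : (M.filter (fun p => a p.1 = q)).image Prod.fst ∪ U.filter (fun i => a i = q) ⊆
        Finset.univ.filter (fun i => a i = q) := by
      intro i hi
      simp only [Finset.mem_union, Finset.mem_image, Finset.mem_filter, Finset.mem_univ, true_and] at hi ⊢
      rcases hi with ⟨p, hp, rfl⟩ | hi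
      · exact hp.2
      · exact hi.2
    have h7 : Disjoint ((M.filter (fun p => a p.1 = q)).image Prod.fst) (U.filter (fun i => a i = q)) := by
      rw [Finset.disjoint_left]
      intro i hi hi'
      simp only [hU, Finset.mem_image, Finset.mem_filter, Finset.mem_univ, true_and] at hi hi'
      obtain ⟨p, hp, e⟩ := hi
      exact hi'.1 p hp.1 e
    have h8 := Finset.card_le_card h6
    rw [Finset.card_union_of_disjoint h7] at h8
    have h9 := h4.trans Finset.card_image_le
    have : (Finset.univ.filter (fun j => b j = q)).card + (U.filter (fun i => a i = q)).card ≤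
      (Finset.univ.filter (fun i => a i = q)).card := by omega
    have : ((Finset.univ.filter (fun j => b j = q)).card : ℝ) + (U.filter (fun i => a i = q)).card ≤
      (Finset.univ.filter (fun i => a i = q)).card := by exact_mod_cast this
    linarith

lemma chain (w : α → β → ℝ) (a : ℕ → α → ι) (b : ℕ → β → ι) (S : ℕ → Finset ι) (δ : ℕ → ℝ)
    (ha : ∀ k i, a k i ∈ S k) (hδ : ∀ k, 0 ≤ δ k)
    (hw : ∀ k i j, a k i = b k j → w i j ≤ δ k)
    (hnest : ∀ k i j, a (k+1) i = b (k+1) j → a k i = b k j) (K : ℕ) :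
    ∀ M : Finset (α × β), IsM M → Same (a K) (b K) M → Mx (a K) (b K) M →
    ∃ M' : Finset (α × β), IsM M' ∧ Mx (a 0) (b 0) M' ∧
      ∑ p ∈ M', w p.1 p.2 ≤ ∑ p ∈ M, w p.1 p.2 +
      ∑ l ∈ Finset.range K, δ l * ∑ q ∈ S (l+1),
        |((Finset.univ.filter (fun i => a (l+1) i = q)).card : ℝ)
          - ((Finset.univ.filter (fun j => b (l+1) j = q)).card : ℝ)| := by
  induction K with
  | zero => intro M h hs hm; exact ⟨M, h, hm, by simp⟩
  | succ K ih =>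
    intro M h hs hm
    obtain ⟨M1, hsub, h1, hs1, hm1⟩ := exists_ext (a K) (b K) M h
      (fun p hp => hnest K _ _ (hs p hp))
    obtain ⟨M', h', hm', hle⟩ := ih M1 h1 hs1 hm1
    refine ⟨M', h', hm', hle.trans ?_⟩
    rw [Finset.sum_range_succ, ← Finset.sum_sdiff hsub]
    have hc := card_sdiff_le (a (K+1)) (b (K+1)) (S (K+1)) (ha _) M M1 hsub h1 hs hm
    have hb : ∑ p ∈ M1 \ M, w p.1 p.2 ≤ δ K * (M1 \ M).card := by
      calc ∑ p ∈ M1 \ M, w p.1 p.2 ≤ ∑ p ∈ M1 \ M, δ K :=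
            Finset.sum_le_sum fun p hp => hw K _ _ (hs1 p (Finset.mem_sdiff.mp hp).1)
        _ = δ K * (M1 \ M).card := by rw [Finset.sum_const, nsmul_eq_mul, mul_comm]
    have := mul_le_mul_of_nonneg_left hc (hδ K)
    linarith

lemma IsM.card_fst {M : Finset (α × β)} (h : IsM M) : M.card ≤ Fintype.card α := by
  rw [← Finset.card_image_of_injOn (f := Prod.fst) (s := M)]
  · exact Finset.card_le_univ _
  · intro p hp q hq e; exact h p hp q hq (Or.inl e)

lemma IsM.card_snd {M : Finset (α × β)} (h : IsM M) : M.card ≤ Fintype.card β := by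
  rw [← Finset.card_image_of_injOn (f := Prod.snd) (s := M)]
  · exact Finset.card_le_univ _
  · intro p hp q hq e; exact h p hp q hq (Or.inr e)

lemma chain_full (w : α → β → ℝ) (a : ℕ → α → ι) (b : ℕ → β → ι) (S : ℕ → Finset ι) (δ : ℕ → ℝ)
    (ha : ∀ k i, a k i ∈ S k) (hδ : ∀ k, 0 ≤ δ k)
    (hw : ∀ k i j, a k i = b k j → w i j ≤ δ k)
    (hnest : ∀ k i j, a (k+1) i = b (k+1) j → a k i = b k j) 
    (h0 : ∀ i j, a 0 i = b 0 j) (K : ℕ) :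
    ∃ M' : Finset (α × β), IsM M' ∧ M'.card = min (Fintype.card α) (Fintype.card β) ∧
      ∑ p ∈ M', w p.1 p.2 ≤ δ K * Fintype.card α +
      ∑ l ∈ Finset.range K, δ l * ∑ q ∈ S (l+1),
        |((Finset.univ.filter (fun i => a (l+1) i = q)).card : ℝ)
          - ((Finset.univ.filter (fun j => b (l+1) j = q)).card : ℝ)| := by
  obtain ⟨M, _, h, hs, hm⟩ := exists_ext (a K) (b K) ∅ (by intro p hp; simp at hp) (by intro p hp; simp at hp)
  obtain ⟨M', h', hm', hle⟩ := chain w a b S δ ha hδ hw hnest K M h hs hm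
  refine ⟨M', h', ?_, hle.trans ?_⟩
  · apply le_antisymm (le_min h'.card_fst h'.card_snd)
    by_cases hA : ∀ i, ∃ p ∈ M', p.1 = i
    · refine (min_le_left _ _).trans ?_
      rw [← Finset.card_univ]
      refine (Finset.card_le_card ?_).trans (Finset.card_image_le (s := M') (f := Prod.fst))
      intro i _
      simpa using hA i
    · push Not at hA
      obtain ⟨i, hi⟩ := hA
      refine (min_le_right _ _).trans ?_
      rw [← Finset.card_univ]
      refine (Finset.card_le_card ?_).trans (Finset.card_image_le (s := M') (f := Prod.snd))
      intro j _
      rcases hm' i j (h0 i j) with ⟨p, hp, e⟩ | ⟨p, hp, e⟩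
      · exact absurd e (hi p hp)
      · exact Finset.mem_image.mpr ⟨p, hp, e⟩
  · gcongr
    calc ∑ p ∈ M, w p.1 p.2 ≤ ∑ p ∈ M, δ K :=
            Finset.sum_le_sum fun p hp => hw K _ _ (hs p hp)
        _ = δ K * M.card := by rw [Finset.sum_const, nsmul_eq_mul, mul_comm]
        _ ≤ _ := by gcongr; exacts [hδ K, h.card_fst]
end A

lemma LMBM_nonneg {d N₁ N₂ : ℕ} (X : Fin N₁ → EuclideanSpace ℝ (Fin d))
    (Y : Fin N₂ → EuclideanSpace ℝ (Fin d)) : 0 ≤ LMBM X Y := by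
  apply Real.sInf_nonneg
  rintro s ⟨σ, τ, _, _, rfl⟩
  positivity

lemma LMBM_le {d N₁ N₂ : ℕ} (X : Fin N₁ → EuclideanSpace ℝ (Fin d))
    (Y : Fin N₂ → EuclideanSpace ℝ (Fin d)) (M : Finset (Fin N₁ × Fin N₂)) (h : IsM M)
    (hc : M.card = min N₁ N₂) : LMBM X Y ≤ ∑ p ∈ M, dist (X p.1) (Y p.2) := by
  have hc' : M.card = min (Finset.univ : Finset (Fin N₁)).card (Finset.univ : Finset (Fin N₂)).card := by
    simpa using hc
  let e := (M.equivFinOfCardEq hc').symm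
  apply csInf_le
  · refine ⟨0, ?_⟩
    rintro s ⟨σ, τ, _, _, rfl⟩
    positivity
  · refine ⟨⟨fun i => (e i).1.1, fun i j hij => e.injective (Subtype.ext (h _ (e i).2 _ (e j).2 (Or.inl hij)))⟩,
      ⟨fun i => (e i).1.2, fun i j hij => e.injective (Subtype.ext (h _ (e i).2 _ (e j).2 (Or.inr hij)))⟩,
      by simp, by simp, ?_⟩
    rw [← Finset.sum_coe_sort]
    exact (e.sum_comp (fun p : M => dist (X p.1.1) (Y p.1.2))).symm

noncomputable def cell (k : ℕ) (x : EuclideanSpace ℝ (Fin 2)) : ℕ × ℕ :=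
  (⌊(2:ℝ)^k * (x 0 / 2)⌋₊, ⌊(2:ℝ)^k * (x 1 / 2)⌋₊)

def cells (k : ℕ) : Finset (ℕ × ℕ) := Finset.range (2^k) ×ˢ Finset.range (2^k)

lemma cell_mem (k : ℕ) (x : EuclideanSpace ℝ (Fin 2)) (hx : x ∈ unitCube 2) : cell k x ∈ cells k := by
  have h : ∀ i, ⌊(2:ℝ)^k * (x i / 2)⌋₊ < 2^k := by
    intro i
    obtain ⟨h0, h1⟩ := hx i
    rw [Nat.floor_lt (by positivity)]
    push_cast
    have : (0:ℝ) < 2^k := by positivity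
    nlinarith
  simp [cell, cells, h]

lemma cell_zero (x : EuclideanSpace ℝ (Fin 2)) (hx : x ∈ unitCube 2) : cell 0 x = (0,0) := by
  have := cell_mem 0 x hx
  simpa [cells, Prod.ext_iff] using this

lemma cell_nest (k : ℕ) (x y : EuclideanSpace ℝ (Fin 2)) (h : cell (k+1) x = cell (k+1) y) :
    cell k x = cell k y := by
  have h : ∀ i, ⌊(2:ℝ)^k * (x i / 2)⌋₊ = ⌊(2:ℝ)^(k+1) * (x i / 2)⌋₊ / 2 := by
    intro i
    rw [← Nat.floor_div_ofNat]
    congr 1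
    rw [pow_succ]; ring
  have h' : ∀ i, ⌊(2:ℝ)^k * (y i / 2)⌋₊ = ⌊(2:ℝ)^(k+1) * (y i / 2)⌋₊ / 2 := by
    intro i
    rw [← Nat.floor_div_ofNat]
    congr 1
    rw [pow_succ]; ring
  simp only [cell, Prod.mk.injEq] at *
  simp_all

lemma floor_close {u v : ℝ} (hu : 0 ≤ u) (hv : 0 ≤ v) (h : ⌊u⌋₊ = ⌊v⌋₊) : |u - v| ≤ 1 := by
  have h1 := Nat.floor_le hu
  have h2 := Nat.floor_le hv
  have h3 := Nat.lt_floor_add_one u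
  have h4 := Nat.lt_floor_add_one v
  rw [h] at h1 h3
  rw [abs_le]; constructor <;> linarith

lemma cell_dist (k : ℕ) (x y : EuclideanSpace ℝ (Fin 2)) (hx : x ∈ unitCube 2) (hy : y ∈ unitCube 2)
    (h : cell k x = cell k y) : dist x y ≤ 4 * (1/2)^k := by
  have key : ∀ i, ⌊(2:ℝ)^k * (x i / 2)⌋₊ = ⌊(2:ℝ)^k * (y i / 2)⌋₊ → |x i - y i| ≤ 2 * (1/2)^k := by
    intro i e
    have hx0 := (hx i).1
    have hy0 := (hy i).1
    have := floor_close (by positivity) (by positivity) e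
    have e2 : x i - y i = (2:ℝ)^k * (x i / 2) * (2 * (1/2)^k) - (2:ℝ)^k * (y i / 2) * (2 * (1/2)^k) := by
      have : (2:ℝ)^k * (1/2)^k = 1 := by rw [← mul_pow]; norm_num
      linear_combination (-(x i) + y i) * this
    rw [e2, ← sub_mul, abs_mul, abs_of_nonneg (a := 2 * (1/2 : ℝ)^k) (by positivity)]
    have : (0:ℝ) ≤ 2 * (1/2)^k := by positivity
    nlinarith
  simp only [cell, Prod.mk.injEq] at h
  have h0 := key 0 h.1
  have h1 := key 1 h.2
  rw [EuclideanSpace.dist_eq, Fin.sum_univ_two, Real.dist_eq, Real.dist_eq]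
  apply Real.sqrt_le_iff.mpr
  have : (0:ℝ) ≤ 2 * (1/2)^k := by positivity
  refine ⟨by positivity, ?_⟩
  nlinarith [abs_nonneg (x 0 - y 0), abs_nonneg (x 1 - y 1)]

/-- indicator of a cell -/
noncomputable def ind (k : ℕ) (q : ℕ × ℕ) (x : EuclideanSpace ℝ (Fin 2)) : ℝ := if cell k x = q then 1 else 0

lemma LMBM_bound {N₁ N₂ : ℕ} (X : Fin N₁ → EuclideanSpace ℝ (Fin 2))
    (Y : Fin N₂ → EuclideanSpace ℝ (Fin 2)) (hX : ∀ i, X i ∈ unitCube 2) (hY : ∀ i, Y i ∈ unitCube 2)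
    (K : ℕ) : LMBM X Y ≤ 4 * (1/2)^K * N₁ + ∑ l ∈ Finset.range K, 4 * (1/2)^l * ∑ q ∈ cells (l+1),
      |∑ i, ind (l+1) q (X i) - ∑ j, ind (l+1) q (Y j)| := by
  obtain ⟨M, hM, hc, hle⟩ := chain_full (fun i j => dist (X i) (Y j)) (fun k i => cell k (X i))
    (fun k i => cell k (Y i)) cells (fun k => 4 * (1/2)^k) (fun k i => cell_mem k _ (hX i))
    (fun k => by positivity) (fun k i j h => cell_dist k _ _ (hX i) (hY j) h)
    (fun k i j h => cell_nest k _ _ h) (fun i j => by rw [cell_zero _ (hX i), cell_zero _ (hY j)]) K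
  refine (LMBM_le X Y M hM (by simpa using hc)).trans (hle.trans_eq ?_)
  simp [ind]
/-- Poisson weight -/
noncomputable def pw (lam : ℝ) (n : ℕ) : ℝ := Real.exp (-lam) * lam ^ n / n.factorial

lemma pw_nonneg {lam : ℝ} (h : 0 ≤ lam) (n : ℕ) : 0 ≤ pw lam n := by unfold pw; positivity

lemma pw_succ (lam : ℝ) (n : ℕ) : pw lam (n+1) * ((n+1 : ℕ) : ℝ) = lam * pw lam n := by
  unfold pw
  rw [Nat.factorial_succ]
  have : (n.factorial : ℝ) ≠ 0 := by positivity
  have : ((n + 1 : ℕ) : ℝ) ≠ 0 := by positivity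
  push_cast at *
  field_simp
  ring

lemma pw_sum0 (lam : ℝ) : HasSum (pw lam) 1 := by
  have := (NormedSpace.expSeries_div_hasSum_exp lam).mul_left (Real.exp (-lam))
  rw [← Real.exp_eq_exp_ℝ, ← Real.exp_add] at this
  simp only [neg_add_cancel, Real.exp_zero] at this
  have e : pw lam = fun n => Real.exp (-lam) * (lam ^ n / n.factorial) := by
    funext n; unfold pw; ring
  rw [e]; exact this

lemma pw_sum1 (lam : ℝ) : HasSum (fun n => pw lam n * (n:ℝ)) lam := by
  rw [← hasSum_nat_add_iff' 1]
  simp only [pw_succ]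
  simpa using (pw_sum0 lam).mul_left lam

lemma pw_sum2 (lam : ℝ) : HasSum (fun n => pw lam n * (n:ℝ)^2) (lam^2 + lam) := by
  rw [← hasSum_nat_add_iff' 1]
  have : ∀ n : ℕ, pw lam (n+1) * ((n+1 : ℕ) : ℝ)^2 = lam * (pw lam n * n) + lam * pw lam n := by
    intro n
    rw [sq, ← mul_assoc, pw_succ]; push_cast; ring
  simp only [this]
  have := ((pw_sum1 lam).mul_left lam).add ((pw_sum0 lam).mul_left lam)
  simpa [sq] using this

lemma poisson_double (lam α β : ℝ) (hl : 0 ≤ lam) (I : ℕ → ℕ → ℝ)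
    (h0 : ∀ m n, 0 ≤ I m n) (hI : ∀ m n : ℕ, I m n ≤ α + β * ((m:ℝ) + n + ((m:ℝ) - n)^2)) :
    ∑' m, ∑' n, pw lam m * (pw lam n * I m n) ≤ α + 4 * β * lam := by
  have inner : ∀ m : ℕ, HasSum (fun n => pw lam m * (pw lam n * (α + β * ((m:ℝ) + n + ((m:ℝ) - n)^2))))
      (pw lam m * (α + β * (m + lam + m^2 - 2 * m * lam + lam^2 + lam))) := by
    intro m
    apply HasSum.mul_left
    convert (((pw_sum0 lam).mul_left (α + β * (m + m^2))).add
      ((pw_sum1 lam).mul_left (β * (1 - 2 * m)))).add ((pw_sum2 lam).mul_left β) using 1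
    · ext n; ring
    · ring
  have le1 : ∀ m n : ℕ, pw lam m * (pw lam n * I m n) ≤
      pw lam m * (pw lam n * (α + β * ((m:ℝ) + n + ((m:ℝ) - n)^2))) := fun m n =>
    mul_le_mul_of_nonneg_left (mul_le_mul_of_nonneg_left (hI m n) (pw_nonneg hl n)) (pw_nonneg hl m)
  have nn : ∀ m n : ℕ, 0 ≤ pw lam m * (pw lam n * I m n) := fun m n =>
    mul_nonneg (pw_nonneg hl m) (mul_nonneg (pw_nonneg hl n) (h0 m n))
  have le2 : ∀ m : ℕ, ∑' n, pw lam m * (pw lam n * I m n) ≤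
      pw lam m * (α + β * (m + lam + m^2 - 2 * m * lam + lam^2 + lam)) := fun m =>
    hasSum_le (le1 m) (Summable.of_nonneg_of_le (nn m) (le1 m) (inner m).summable).hasSum (inner m)
  have outer : HasSum (fun m : ℕ => pw lam m * (α + β * (m + lam + m^2 - 2 * m * lam + lam^2 + lam)))
      (α + 4 * β * lam) := by
    have e := (((pw_sum0 lam).mul_left (α + β * (lam + lam^2 + lam))).add
      ((pw_sum1 lam).mul_left (β * (1 - 2 * lam)))).add ((pw_sum2 lam).mul_left β)
    have e1 : (α + β * (lam + lam^2 + lam)) * 1 + β * (1 - 2 * lam) * lam + β * (lam^2 + lam) =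
      α + 4 * β * lam := by ring
    rw [e1] at e
    have e2 : (fun m : ℕ => pw lam m * (α + β * (m + lam + m^2 - 2 * m * lam + lam^2 + lam))) =
      fun b => (α + β * (lam + lam ^ 2 + lam)) * pw lam b + β * (1 - 2 * lam) * (pw lam b * ↑b)
        + β * (pw lam b * ↑b ^ 2) := by
      funext n; ring
    rw [e2]; exact e
  exact hasSum_le le2 (Summable.of_nonneg_of_le (fun m => tsum_nonneg (nn m)) le2 outer.summable).hasSum outer
abbrev E2 := EuclideanSpace ℝ (Fin 2)

lemma measurableSet_unitCube (d : ℕ) : MeasurableSet (unitCube d) := by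
  have : unitCube d = ⋂ i, (fun x : EuclideanSpace ℝ (Fin d) => x i) ⁻¹' (Set.Icc (0:ℝ) 1) := by
    ext x; simp [unitCube]
  rw [this]
  exact MeasurableSet.iInter fun i => measurableSet_Icc.preimage (by fun_prop)

instance unifCube_prob (d : ℕ) : IsProbabilityMeasure (unifCube d) := by
  constructor
  rw [unifCube, Measure.restrict_apply_univ]
  have h := (PiLp.volume_preserving_ofLp (Fin d)).measure_preimage
    (s := Set.univ.pi fun _ => Set.Icc (0:ℝ) 1)
    (MeasurableSet.univ_pi fun _ => measurableSet_Icc).nullMeasurableSet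
  have e : unitCube d = (WithLp.ofLp) ⁻¹' (Set.univ.pi fun _ => Set.Icc (0:ℝ) 1) := by
    ext x; simp only [unitCube, Set.mem_preimage, Set.mem_pi, Set.mem_univ, true_imp_iff]; rfl
  rw [e, h, volume_pi_pi]
  simp

lemma measurable_ind (k : ℕ) (q : ℕ × ℕ) : Measurable (ind k q) := by
  unfold ind
  apply Measurable.ite _ measurable_const measurable_const
  have : Measurable (cell k) := by
    unfold cell
    fun_prop
  exact this (measurableSet_singleton q)

lemma ind_nonneg (k : ℕ) (q : ℕ × ℕ) (x : E2) : 0 ≤ ind k q x := by unfold ind; split_ifs <;> norm_num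
lemma ind_le (k : ℕ) (q : ℕ × ℕ) (x : E2) : ind k q x ≤ 1 := by unfold ind; split_ifs <;> norm_num
lemma ind_sq (k : ℕ) (q : ℕ × ℕ) (x : E2) : ind k q x ^ 2 = ind k q x := by unfold ind; split_ifs <;> norm_num

/-- sum of indicators -/
noncomputable def cnt (k : ℕ) (q : ℕ × ℕ) {n : ℕ} (x : Fin n → E2) : ℝ := ∑ i, ind k q (x i)

lemma measurable_cnt (k : ℕ) (q : ℕ × ℕ) (n : ℕ) : Measurable (cnt k q (n := n)) := by
  unfold cnt
  exact Finset.measurable_sum _ fun i _ => (measurable_ind k q).comp (measurable_pi_apply i)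

lemma cnt_nonneg (k : ℕ) (q : ℕ × ℕ) {n : ℕ} (x : Fin n → E2) : 0 ≤ cnt k q x :=
  Finset.sum_nonneg fun i _ => ind_nonneg _ _ _
lemma cnt_le (k : ℕ) (q : ℕ × ℕ) {n : ℕ} (x : Fin n → E2) : cnt k q x ≤ n := by
  unfold cnt
  calc _ ≤ ∑ i : Fin n, (1:ℝ) := Finset.sum_le_sum fun i _ => ind_le _ _ _
    _ = n := by simp

noncomputable def pq (k : ℕ) (q : ℕ × ℕ) : ℝ := ∫ x, ind k q x ∂(unifCube 2)

lemma memLp_ind (k : ℕ) (q : ℕ × ℕ) (p : ENNReal) : MemLp (ind k q) p (unifCube 2) := by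
  apply MemLp.of_bound (measurable_ind k q).aestronglyMeasurable 1
  filter_upwards with x
  rw [Real.norm_of_nonneg (ind_nonneg _ _ _)]; exact ind_le _ _ _

lemma pq_nonneg (k : ℕ) (q : ℕ × ℕ) : 0 ≤ pq k q := integral_nonneg fun x => ind_nonneg k q x

lemma integrable_ind (k : ℕ) (q : ℕ × ℕ) : Integrable (ind k q) (unifCube 2) :=
  memLp_one_iff_integrable.mp (memLp_ind k q 1)

lemma sum_pq_le (k : ℕ) (S : Finset (ℕ × ℕ)) : ∑ q ∈ S, pq k q ≤ 1 := by
  unfold pq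
  rw [← integral_finsetSum _ fun q _ => integrable_ind k q]
  calc _ ≤ ∫ x, (1:ℝ) ∂(unifCube 2) := by
        apply integral_mono (integrable_finsetSum _ fun q _ => integrable_ind k q) (integrable_const _)
        intro x
        simp only [ind, Finset.sum_ite_eq]
        split_ifs <;> norm_num
    _ = 1 := by simp

lemma pq_le (k : ℕ) (q : ℕ × ℕ) : pq k q ≤ 1 := by
  simpa using sum_pq_le k {q}

lemma var_cnt (k : ℕ) (q : ℕ × ℕ) (n : ℕ) :
    ∫ x : Fin n → E2, (cnt k q x - n * pq k q)^2 ∂(Measure.pi fun _ => unifCube 2) ≤ n * pq k q := by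
  have h1 := variance_sum_pi (ι := Fin n) (μ := fun _ => unifCube 2) (X := fun _ => ind k q)
    (fun _ => memLp_ind k q 2)
  have e : (∑ i : Fin n, fun ω : Fin n → E2 => ind k q (ω i)) = cnt k q := by
    ext x; simp [cnt]
  rw [e, variance_eq_integral (measurable_cnt k q n).aemeasurable] at h1
  have h2 : ∫ x : Fin n → E2, cnt k q x ∂(Measure.pi fun _ => unifCube 2) = n * pq k q := by
    unfold cnt
    rw [integral_finsetSum]
    · have : ∀ i : Fin n, ∫ x : Fin n → E2, ind k q (x i) ∂(Measure.pi fun _ => unifCube 2) = pq k q := by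
        intro i
        exact integral_comp_eval (μ := fun _ : Fin n => unifCube 2) (i := i) (measurable_ind k q).aestronglyMeasurable
      simp [this]
    · intro i _
      exact integrable_comp_eval (μ := fun _ : Fin n => unifCube 2) (i := i) (integrable_ind k q)
  rw [h2] at h1
  rw [h1]
  calc _ ≤ ∑ i : Fin n, pq k q := by
        apply Finset.sum_le_sum
        intro i _
        refine (variance_le_expectation_sq (measurable_ind k q).aestronglyMeasurable).trans_eq ?_
        simp only [Pi.pow_apply, ind_sq, pq]
    _ = _ := by simp

noncomputable abbrev PP (m n : ℕ) : Measure ((Fin m → E2) × (Fin n → E2)) :=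
  (Measure.pi fun _ => unifCube 2).prod (Measure.pi fun _ => unifCube 2)

lemma integrable_of_bdd {Ω : Type*} [MeasurableSpace Ω] (μ : Measure Ω) [IsFiniteMeasure μ] {f : Ω → ℝ}
    (hf : Measurable f) (C : ℝ) (h : ∀ x, |f x| ≤ C) : Integrable f μ :=
  Integrable.of_bound hf.aestronglyMeasurable C (Eventually.of_forall h)

lemma integrable_absZ (k : ℕ) (q : ℕ × ℕ) (m n : ℕ) :
    Integrable (fun p : (Fin m → E2) × (Fin n → E2) => |cnt k q p.1 - cnt k q p.2|) (PP m n) := by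
  apply integrable_of_bdd _ _ (m + n)
  · intro p
    rw [abs_abs, abs_le]
    constructor <;> linarith [cnt_nonneg k q p.1, cnt_nonneg k q p.2, cnt_le k q p.1, cnt_le k q p.2]
  · exact (((measurable_cnt k q m).comp measurable_fst).sub ((measurable_cnt k q n).comp measurable_snd)).abs

lemma integrable_sqdev (k : ℕ) (q : ℕ × ℕ) (n : ℕ) :
    Integrable (fun x : Fin n → E2 => (cnt k q x - n * pq k q)^2) (Measure.pi fun _ => unifCube 2) := by
  apply integrable_of_bdd _ _ (n^2)
  · intro x
    rw [abs_of_nonneg (sq_nonneg _)]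
    apply sq_le_sq'
    · have : (n:ℝ) * pq k q ≤ n := mul_le_of_le_one_right (by positivity) (pq_le k q)
      linarith [cnt_nonneg k q x]
    · have : 0 ≤ (n:ℝ) * pq k q := mul_nonneg (by positivity) (pq_nonneg k q)
      linarith [cnt_le k q x]
  · exact ((measurable_cnt k q n).sub_const _).pow_const 2

lemma int_absZ (k : ℕ) (q : ℕ × ℕ) (m n : ℕ) (t : ℝ) (ht : 0 < t) :
    ∫ p : (Fin m → E2) × (Fin n → E2), |cnt k q p.1 - cnt k q p.2| ∂(PP m n) ≤
      2 * t + 2 / t * (((m:ℝ) + n + ((m:ℝ) - n)^2) * pq k q) := by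
  have h1 : Integrable (fun p : (Fin m → E2) × (Fin n → E2) => (cnt k q p.1 - m * pq k q)^2) (PP m n) :=
    (integrable_sqdev k q m).comp_fst _
  have h2 : Integrable (fun p : (Fin m → E2) × (Fin n → E2) => (cnt k q p.2 - n * pq k q)^2) (PP m n) :=
    (integrable_sqdev k q n).comp_snd _
  have h12 : Integrable (fun p : (Fin m → E2) × (Fin n → E2) => 2 / t * ((cnt k q p.1 - m * pq k q)^2) +
        2 / t * ((cnt k q p.2 - n * pq k q)^2)) (PP m n) := (h1.const_mul _).add (h2.const_mul _)
  have h123 : Integrable (fun p : (Fin m → E2) × (Fin n → E2) => 2 / t * ((cnt k q p.1 - m * pq k q)^2) +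
        2 / t * ((cnt k q p.2 - n * pq k q)^2) + (2 * t + 2 / t * (((m:ℝ) - n)^2 * pq k q))) (PP m n) :=
    h12.add (integrable_const _)
  calc _ ≤ ∫ p : (Fin m → E2) × (Fin n → E2), (2 / t * ((cnt k q p.1 - m * pq k q)^2) +
        2 / t * ((cnt k q p.2 - n * pq k q)^2) + (2 * t + 2 / t * (((m:ℝ) - n)^2 * pq k q))) ∂(PP m n) := by
        apply integral_mono (integrable_absZ k q m n) h123
        intro p
        simp only
        set a := cnt k q p.1 - m * pq k q with ha
        set b := cnt k q p.2 - n * pq k q with hb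
        have e : cnt k q p.1 - cnt k q p.2 = a - b + (m - n) * pq k q := by rw [ha, hb]; ring
        rw [e]
        set c := ((m:ℝ) - n) * pq k q with hc
        have hc2 : c^2 ≤ ((m:ℝ) - n)^2 * pq k q := by
          rw [hc, mul_pow]
          apply mul_le_mul_of_nonneg_left _ (sq_nonneg _)
          nlinarith [pq_nonneg k q, pq_le k q]
        have key : |a - b + c| * t ≤ 2 * a^2 + 2 * b^2 + 2 * c^2 + 2 * t^2 := by
          rw [← abs_of_pos ht, ← abs_mul, abs_of_pos ht, abs_le]
          constructor <;> nlinarith [sq_nonneg (a - b), sq_nonneg (a + b), sq_nonneg (a - b + c + t), sq_nonneg (a - b + c - t), sq_nonneg (a-t), sq_nonneg (a+t), sq_nonneg (b-t), sq_nonneg (b+t), sq_nonneg (c-t), sq_nonneg (c+t)]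
        have : |a - b + c| ≤ (2 * a^2 + 2 * b^2 + 2 * (((m:ℝ) - n)^2 * pq k q) + 2 * t^2) / t := by
          rw [le_div_iff₀ ht]; linarith
        refine this.trans_eq ?_
        field_simp
        ring
    _ = 2 / t * (∫ x : Fin m → E2, (cnt k q x - m * pq k q)^2 ∂(Measure.pi fun _ => unifCube 2)) +
        2 / t * (∫ x : Fin n → E2, (cnt k q x - n * pq k q)^2 ∂(Measure.pi fun _ => unifCube 2)) +
        (2 * t + 2 / t * (((m:ℝ) - n)^2 * pq k q)) := by
        rw [integral_add h12 (integrable_const _),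
          integral_add (h1.const_mul _) (h2.const_mul _), integral_const_mul, integral_const_mul,
          integral_fun_fst (fun x : Fin m → E2 => (cnt k q x - m * pq k q)^2),
          integral_fun_snd (fun x : Fin n → E2 => (cnt k q x - n * pq k q)^2)]
        simp
    _ ≤ 2 / t * (m * pq k q) + 2 / t * (n * pq k q) + (2 * t + 2 / t * (((m:ℝ) - n)^2 * pq k q)) := by
        gcongr
        · exact var_cnt k q m
        · exact var_cnt k q n
    _ = _ := by ring

lemma int_LMBM (m n K : ℕ) (s : ℝ) (hs : 0 < s) :
    ∫ p : (Fin m → E2) × (Fin n → E2), LMBM p.1 p.2 ∂(PP m n) ≤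
      4 * (1/2)^K * m + K * (16 * s + 16 / s * ((m:ℝ) + n + ((m:ℝ) - n)^2)) := by
  have hae : ∀ r : ℕ, ∀ᵐ x ∂(Measure.pi fun _ : Fin r => unifCube 2), ∀ i, x i ∈ unitCube 2 := by
    intro r
    rw [ae_all_iff]
    intro i
    exact Measure.tendsto_eval_ae_ae.eventually (ae_restrict_mem (measurableSet_unitCube 2))
  have hi : ∀ l, Integrable (fun p : (Fin m → E2) × (Fin n → E2) => 4 * (1/2:ℝ)^l * ∑ q ∈ cells (l+1),
      |cnt (l+1) q p.1 - cnt (l+1) q p.2|) (PP m n) := fun l =>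
    (integrable_finsetSum _ fun q _ => integrable_absZ _ q m n).const_mul _
  calc _ ≤ ∫ p : (Fin m → E2) × (Fin n → E2), (4 * (1/2)^K * m + ∑ l ∈ Finset.range K,
        4 * (1/2:ℝ)^l * ∑ q ∈ cells (l+1), |cnt (l+1) q p.1 - cnt (l+1) q p.2|) ∂(PP m n) := by
        apply integral_mono_of_nonneg
        · exact Eventually.of_forall fun p => LMBM_nonneg _ _
        · exact (integrable_const _).add (integrable_finsetSum _ fun l _ => hi l)
        · have a1 : ∀ᵐ p ∂(PP m n), ∀ i, p.1 i ∈ unitCube 2 :=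
            Measure.quasiMeasurePreserving_fst.ae (hae m)
          have a2 : ∀ᵐ p ∂(PP m n), ∀ i, p.2 i ∈ unitCube 2 :=
            Measure.quasiMeasurePreserving_snd.ae (hae n)
          filter_upwards [a1, a2] with p h1 h2
          exact LMBM_bound p.1 p.2 h1 h2 K
    _ = 4 * (1/2)^K * m + ∑ l ∈ Finset.range K, 4 * (1/2:ℝ)^l * ∑ q ∈ cells (l+1),
        ∫ p : (Fin m → E2) × (Fin n → E2), |cnt (l+1) q p.1 - cnt (l+1) q p.2| ∂(PP m n) := by
        rw [integral_add (integrable_const _) (integrable_finsetSum _ fun l _ => hi l),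
          integral_finsetSum _ fun l _ => hi l]
        simp only [integral_const_mul]
        congr 1
        · simp
        · refine Finset.sum_congr rfl fun l _ => ?_
          rw [integral_finsetSum _ fun q _ => integrable_absZ _ q m n]
    _ ≤ 4 * (1/2)^K * m + ∑ l ∈ Finset.range K, (16 * s + 16 / s * ((m:ℝ) + n + ((m:ℝ) - n)^2)) := by
        gcongr with l hl
        set D := (m:ℝ) + n + ((m:ℝ) - n)^2 with hD
        have hD0 : 0 ≤ D := by positivity
        have ht : 0 < s * (1/2)^(l+1) := by positivity
        calc _ ≤ 4 * (1/2:ℝ)^l * ∑ q ∈ cells (l+1), (2 * (s * (1/2)^(l+1)) +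
              2 / (s * (1/2)^(l+1)) * (D * pq (l+1) q)) := by
              gcongr with q hq
              exact int_absZ _ _ _ _ _ ht
          _ = 4 * (1/2:ℝ)^l * (4^(l+1) * (2 * (s * (1/2)^(l+1))) +
              2 / (s * (1/2)^(l+1)) * (D * ∑ q ∈ cells (l+1), pq (l+1) q)) := by
              rw [Finset.sum_add_distrib, Finset.sum_const, nsmul_eq_mul, ← Finset.mul_sum, ← Finset.mul_sum]
              have : ((cells (l+1)).card : ℝ) = 4^(l+1) := by
                simp only [cells, Finset.card_product, Finset.card_range]
                push_cast
                rw [← mul_pow]; norm_num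
              rw [this]
          _ ≤ 4 * (1/2:ℝ)^l * (4^(l+1) * (2 * (s * (1/2)^(l+1))) +
              2 / (s * (1/2)^(l+1)) * (D * 1)) := by
              gcongr
              exact sum_pq_le _ _
          _ = _ := by
              have e4 : (4:ℝ)^(l+1) = 4 * (2^l * 2^l) := by rw [pow_succ, ← mul_pow]; norm_num; ring
              rw [e4, pow_succ, one_div, inv_pow]
              field_simp
              ring
    _ = _ := by rw [Finset.sum_const, Finset.card_range, nsmul_eq_mul]
lemma int_LMBM' (m n : ℕ) (N : ℝ) (hN : 2 ≤ N) :
    ∫ p : (Fin m → E2) × (Fin n → E2), LMBM p.1 p.2 ∂(PP m n) ≤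
      48 * Real.sqrt N * Real.log N + 60 * Real.log N / Real.sqrt N * ((m:ℝ) + n + ((m:ℝ) - n)^2) := by
  have hs : 0 < Real.sqrt N := Real.sqrt_pos.mpr (by linarith)
  have h2 := Real.log_two_gt_d9
  have hlog : Real.log 2 ≤ Real.log N := Real.log_le_log (by norm_num) hN
  set K := ⌈Real.log N⌉₊ with hK
  have hK1 : (1:ℝ) ≤ K := by
    have : 0 < K := Nat.ceil_pos.mpr (by linarith)
    exact_mod_cast this
  have hKl : Real.log N ≤ K := Nat.le_ceil _
  have hKu : (K:ℝ) ≤ 3 * Real.log N := by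
    have := Nat.ceil_lt_add_one (a := Real.log N) (by linarith)
    linarith
  have hpow : (1/2:ℝ)^K ≤ 1 / Real.sqrt N := by
    rw [one_div, inv_pow, one_div]
    apply inv_anti₀ hs
    rw [Real.sqrt_le_left (by positivity), ← Real.log_le_log_iff (by linarith) (by positivity),
      Real.log_pow, Real.log_pow]
    push_cast
    nlinarith
  have h := int_LMBM m n K (Real.sqrt N) hs
  refine h.trans ?_
  set D := (m:ℝ) + n + ((m:ℝ) - n)^2 with hD
  have hmD : (m:ℝ) ≤ D := by
    have : (0:ℝ) ≤ n := by positivity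
    nlinarith [sq_nonneg ((m:ℝ) - n)]
  have hm : (0:ℝ) ≤ m := by positivity
  have hD0 : 0 ≤ D := hm.trans hmD
  calc 4 * (1/2)^K * (m:ℝ) + K * (16 * Real.sqrt N + 16 / Real.sqrt N * D)
      ≤ 4 * (1 / Real.sqrt N) * D + K * (16 * Real.sqrt N + 16 / Real.sqrt N * D) := by gcongr
    _ = 1 * (4 / Real.sqrt N * D) + K * (16 * Real.sqrt N + 16 / Real.sqrt N * D) := by ring
    _ ≤ K * (4 / Real.sqrt N * D) + K * (16 * Real.sqrt N + 16 / Real.sqrt N * D) := by gcongr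
    _ = K * (16 * Real.sqrt N + 20 / Real.sqrt N * D) := by ring
    _ ≤ (3 * Real.log N) * (16 * Real.sqrt N + 20 / Real.sqrt N * D) := by gcongr
    _ = _ := by ring

theorem MP_dim_two_sqrt_log_bound :
    (∃ C : ℝ, 0 < C ∧ ∀ N : ℝ, 2 ≤ N → MP 2 N ≤ C * Real.sqrt N * Real.log N) ∧
    ∃ C' : ℝ, 0 < C' ∧ ∀ N : ℕ, 2 ≤ N →
      (∫ p : (Fin N → EuclideanSpace ℝ (Fin 2)) × (Fin N → EuclideanSpace ℝ (Fin 2)),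
          LMBM p.1 p.2
          ∂ ((Measure.pi fun _ => unifCube 2).prod (Measure.pi fun _ => unifCube 2))) ≤
        C' * Real.sqrt N * Real.log N := by
  constructor
  · refine ⟨288, by norm_num, fun N hN => ?_⟩
    have h := poisson_double N (48 * Real.sqrt N * Real.log N) (60 * Real.log N / Real.sqrt N) (by linarith)
      (fun m n => ∫ p : (Fin m → E2) × (Fin n → E2), LMBM p.1 p.2 ∂(PP m n))
      (fun m n => integral_nonneg fun p => LMBM_nonneg _ _) (fun m n => int_LMBM' m n N hN)
    refine le_trans (le_of_eq ?_) (h.trans (le_of_eq ?_))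
    · rfl
    · have hs : 0 < Real.sqrt N := Real.sqrt_pos.mpr (by linarith)
      have e : N = Real.sqrt N * Real.sqrt N := (Real.mul_self_sqrt (by linarith)).symm
      have : 4 * (60 * Real.log N / Real.sqrt N) * N = 240 * Real.log N * Real.sqrt N := by
        rw [div_eq_mul_inv]
        calc _ = 240 * Real.log N * (Real.sqrt N)⁻¹ * N := by ring
          _ = 240 * Real.log N * (Real.sqrt N)⁻¹ * (Real.sqrt N * Real.sqrt N) := by rw [← e]
          _ = _ := by field_simp
      rw [this]; ring
  · refine ⟨168, by norm_num, fun N hN => ?_⟩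
    have hN' : (2:ℝ) ≤ N := by exact_mod_cast hN
    refine (int_LMBM' N N N hN').trans (le_of_eq ?_)
    have hs : 0 < Real.sqrt N := Real.sqrt_pos.mpr (by linarith)
    have e : (N:ℝ) = Real.sqrt N * Real.sqrt N := (Real.mul_self_sqrt (by linarith)).symm
    have : 60 * Real.log N / Real.sqrt N * ((N:ℝ) + N + ((N:ℝ) - N)^2) = 120 * Real.log N * Real.sqrt N := by
      rw [div_eq_mul_inv]
      calc _ = 120 * Real.log N * (Real.sqrt N)⁻¹ * N := by ring
          _ = 120 * Real.log N * (Real.sqrt N)⁻¹ * (Real.sqrt N * Real.sqrt N) := by rw [← e]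
          _ = _ := by field_simp
    rw [this]; ring
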